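/- Let q ∈ L^1_loc(ℝ : X) be S^1-bounded, let g ∈ L^1(ℝ), and let q ∈ B^1WPAA_0(ℝ, X, ρ₁, ρ₂). Then the convolution g∗q, given by (g∗q)(t) = ∫_{-∞}^{∞} g(t−r) q(r) dr, belongs to B^1WPAA_0(ℝ, X, ρ₁, ρ₂). -/

import Mathlib

/-!
For an `S¹`-bounded function `q`, moving the centre of a window of length `2l` changes the integral
of `‖q‖` over it by `O(1)`, so the upper mean
`limsup_{l → ∞} (1 / (2l)) ∫_{t-l}^{t+l} ‖q‖` does not depend on the centre `t`. It therefore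
factors out of the weighted integral, and `q` belongs to `B¹WPAA₀` iff its upper mean vanishes or
`∫_{-T}^{T} ρ₂ / (2 ∫_{-T}^{T} ρ₁)` tends to zero; the second alternative does not involve `q`.
Convolution with `g ∈ L¹` preserves `S¹`-boundedness and, by Fubini's theorem and dominated
convergence, it also preserves vanishing of the upper mean.
-/

open MeasureTheory Filter Set

/-- A weight of class `U_∞`: locally integrable, a.e. positive, and
`∫_{-T}^{T} ρ(t) dt → ∞` as `T → +∞`. -/
def IsWeightUInfty (ρ : ℝ → ℝ) : Prop :=
  (∀ a b : ℝ, IntervalIntegrable ρ MeasureTheory.volume a b) ∧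
  (∀ᵐ t : ℝ ∂MeasureTheory.volume, 0 < ρ t) ∧
  Filter.Tendsto (fun T : ℝ => ∫ t in (-T)..T, ρ t) Filter.atTop Filter.atTop

/-- Membership in `B^1WPAA_0(ℝ, X, ρ₁, ρ₂)`:
`lim_{T→+∞} (1/(2∫_{-T}^{T} ρ₁)) ∫_{-T}^{T} [limsup_{l→+∞} (1/(2l)) ∫_{t-l}^{t+l} ‖q(s)‖ ds] ρ₂(t) dt = 0`. -/
def MemB1WPAA0 {X : Type*} [NormedAddCommGroup X] (ρ₁ ρ₂ : ℝ → ℝ) (q : ℝ → X) : Prop :=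
  Filter.Tendsto (fun T : ℝ =>
      (1 / (2 * ∫ t in (-T)..T, ρ₁ t)) *
        ∫ t in (-T)..T,
          (Filter.limsup (fun l : ℝ =>
            (1 / (2 * l)) * ∫ s in (t - l)..(t + l), ‖q s‖) Filter.atTop) * ρ₂ t)
    Filter.atTop (nhds 0)

theorem limsup_le_limsup_of_tendsto_sub_zero {α : Type*} {f : Filter α} [f.NeBot] {u v : α → ℝ}
    (hbelow : f.IsBoundedUnder (· ≥ ·) v) (habove : f.IsBoundedUnder (· ≤ ·) v)
    (h : Tendsto (u - v) f (nhds 0)) : limsup u f ≤ limsup v f :=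
  calc limsup u f = limsup ((u - v) + v) f := by rw [sub_add_cancel]
    _ ≤ limsup (u - v) f + limsup v f :=
      limsup_add_le h.isBoundedUnder_ge h.isBoundedUnder_le hbelow.isCoboundedUnder_le habove
    _ = limsup v f := by rw [h.limsup_eq, zero_add]

section StepanovBounded

variable {E : Type*} [NormedAddCommGroup E]

/-- `S¹`-boundedness (Stepanov boundedness) of a locally integrable function `q`, with explicit
bound `C` on the integrals of `‖q‖` over unit intervals. Local integrability is recorded as
measurability together with integrability of `‖q‖` over bounded intervals. -/
structure StepanovBoundedWith (C : ℝ) (q : ℝ → E) : Prop where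
  aestronglyMeasurable : AEStronglyMeasurable q volume
  intervalIntegrable_norm : ∀ a b : ℝ, IntervalIntegrable (fun t => ‖q t‖) volume a b
  integral_norm_le : ∀ t : ℝ, (∫ s in t..(t + 1), ‖q s‖) ≤ C

namespace StepanovBoundedWith

variable {C : ℝ} {q : ℝ → E}

theorem bound_nonneg (hq : StepanovBoundedWith C q) : 0 ≤ C :=
  (intervalIntegral.integral_nonneg (by norm_num) fun _ _ => norm_nonneg _).trans
    (hq.integral_norm_le 0)

theorem integral_norm_add_natCast_le (hq : StepanovBoundedWith C q) (a : ℝ) (n : ℕ) :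
    (∫ s in a..(a + n), ‖q s‖) ≤ n * C :=
  calc (∫ s in a..(a + n), ‖q s‖)
      = ∑ k ∈ Finset.range n, ∫ s in (a + k)..(a + (k + 1 : ℕ)), ‖q s‖ := by
        rw [intervalIntegral.sum_integral_adjacent_intervals fun k _ =>
          hq.intervalIntegrable_norm _ _, Nat.cast_zero, add_zero]
    _ ≤ ∑ _k ∈ Finset.range n, C := by
        gcongr with k
        rw [Nat.cast_add_one, ← add_assoc]
        exact hq.integral_norm_le (a + k)
    _ = n * C := by rw [Finset.sum_const, Finset.card_range, nsmul_eq_mul]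

theorem integral_norm_le_mul (hq : StepanovBoundedWith C q) {a b : ℝ} (hab : a ≤ b) :
    (∫ s in a..b, ‖q s‖) ≤ C * (b - a + 1) := by
  have hceil_le : b - a ≤ ⌈b - a⌉₊ := Nat.le_ceil _
  have hceil_lt : ⌈b - a⌉₊ < b - a + 1 := Nat.ceil_lt_add_one (sub_nonneg.2 hab)
  calc (∫ s in a..b, ‖q s‖) ≤ ∫ s in a..(a + ⌈b - a⌉₊), ‖q s‖ :=
        intervalIntegral.integral_mono_interval le_rfl hab (by linarith)
          (Eventually.of_forall fun _ => norm_nonneg _) (hq.intervalIntegrable_norm _ _)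
    _ ≤ ⌈b - a⌉₊ * C := hq.integral_norm_add_natCast_le a _
    _ ≤ C * (b - a + 1) := by
        rw [mul_comm]
        exact mul_le_mul_of_nonneg_left hceil_lt.le hq.bound_nonneg

theorem abs_integral_norm_le_mul (hq : StepanovBoundedWith C q) (a b : ℝ) :
    |∫ s in a..b, ‖q s‖| ≤ C * (|b - a| + 1) := by
  wlog hab : a ≤ b generalizing a b
  · rw [intervalIntegral.integral_symm, abs_neg, abs_sub_comm]
    exact this b a (le_of_not_ge hab)
  rw [abs_of_nonneg (intervalIntegral.integral_nonneg hab fun _ _ => norm_nonneg _),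
    abs_of_nonneg (sub_nonneg.2 hab)]
  exact hq.integral_norm_le_mul hab

theorem continuous_integral_norm (hq : StepanovBoundedWith C q) {α : Type*} [TopologicalSpace α]
    {a b : α → ℝ} (ha : Continuous a) (hb : Continuous b) :
    Continuous fun x => ∫ s in (a x)..(b x), ‖q s‖ := by
  have hprimitive := intervalIntegral.continuous_primitive hq.intervalIntegrable_norm 0
  have hsub (x : α) : (∫ s in (a x)..(b x), ‖q s‖) =
      (∫ s in (0 : ℝ)..(b x), ‖q s‖) - ∫ s in (0 : ℝ)..(a x), ‖q s‖ :=
    (intervalIntegral.integral_interval_sub_left (hq.intervalIntegrable_norm _ _)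
      (hq.intervalIntegrable_norm _ _)).symm
  simp only [hsub]
  exact (hprimitive.comp hb).sub (hprimitive.comp ha)

end StepanovBoundedWith

end StepanovBounded

section BesicovitchSeminorm

variable {E : Type*} [NormedAddCommGroup E]

/-- The average of `‖q‖` over the window `[t - l, t + l]`, the quantity whose behaviour as `l → ∞`
defines the Besicovitch seminorm. Only `0 < l` is meaningful. -/
noncomputable def normAverage (q : ℝ → E) (t l : ℝ) : ℝ :=
  (1 / (2 * l)) * ∫ s in (t - l)..(t + l), ‖q s‖

/-- The Besicovitch `B¹`-seminorm of `q`, computed with windows centred at `t`: the inner `limsup`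
of `MemB1WPAA0`. Being a `limsup` in `ℝ`, it is meaningful only if the averages are bounded. -/
noncomputable def besicovitchSeminorm (q : ℝ → E) (t : ℝ) : ℝ :=
  limsup (normAverage q t) atTop

theorem normAverage_nonneg (q : ℝ → E) (t : ℝ) {l : ℝ} (hl : 0 ≤ l) : 0 ≤ normAverage q t l :=
  mul_nonneg (by positivity)
    (intervalIntegral.integral_nonneg (by linarith) fun _ _ => norm_nonneg _)

theorem isBoundedUnder_ge_normAverage (q : ℝ → E) (t : ℝ) :
    atTop.IsBoundedUnder (· ≥ ·) (normAverage q t) :=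
  isBoundedUnder_of_eventually_ge ((eventually_ge_atTop 0).mono fun _ => normAverage_nonneg q t)

namespace StepanovBoundedWith

variable {C : ℝ} {q : ℝ → E}

theorem normAverage_le (hq : StepanovBoundedWith C q) (t : ℝ) {l : ℝ} (hl : 1 ≤ l) :
    normAverage q t l ≤ 2 * C := by
  have hintegral := hq.integral_norm_le_mul (show t - l ≤ t + l by linarith)
  rw [normAverage, one_div_mul_eq_div, div_le_iff₀ (by linarith)]
  nlinarith [hq.bound_nonneg]

theorem continuous_normAverage (hq : StepanovBoundedWith C q) (l : ℝ) :
    Continuous fun t => normAverage q t l :=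
  (hq.continuous_integral_norm (continuous_id.sub continuous_const)
    (continuous_id.add continuous_const)).const_mul _

theorem isBoundedUnder_le_normAverage (hq : StepanovBoundedWith C q) (t : ℝ) :
    atTop.IsBoundedUnder (· ≤ ·) (normAverage q t) :=
  isBoundedUnder_of_eventually_le ((eventually_ge_atTop 1).mono fun _ => hq.normAverage_le t)

theorem abs_normAverage_sub_le (hq : StepanovBoundedWith C q) (x y : ℝ) {l : ℝ} (hl : 0 < l) :
    |normAverage q x l - normAverage q y l| ≤ C * (|x - y| + 1) / l := by
  have hswap : (∫ s in (x - l)..(x + l), ‖q s‖) - (∫ s in (y - l)..(y + l), ‖q s‖) =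
      (∫ s in (y + l)..(x + l), ‖q s‖) - ∫ s in (y - l)..(x - l), ‖q s‖ :=
    intervalIntegral.integral_interval_sub_interval_comm' (hq.intervalIntegrable_norm _ _)
      (hq.intervalIntegrable_norm _ _) (hq.intervalIntegrable_norm _ _)
  have hright := hq.abs_integral_norm_le_mul (y + l) (x + l)
  have hleft := hq.abs_integral_norm_le_mul (y - l) (x - l)
  rw [add_sub_add_right_eq_sub] at hright
  rw [sub_sub_sub_cancel_right] at hleft
  calc |normAverage q x l - normAverage q y l|
      = 1 / (2 * l) *
          |(∫ s in (y + l)..(x + l), ‖q s‖) - ∫ s in (y - l)..(x - l), ‖q s‖| := by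
        rw [normAverage, normAverage, ← mul_sub, hswap, abs_mul,
          abs_of_pos (show 0 < 1 / (2 * l) by positivity)]
    _ ≤ 1 / (2 * l) * (C * (|x - y| + 1) + C * (|x - y| + 1)) := by
        gcongr
        exact (abs_sub _ _).trans (add_le_add hright hleft)
    _ = C * (|x - y| + 1) / l := by field_simp; ring

theorem tendsto_normAverage_sub (hq : StepanovBoundedWith C q) (x y : ℝ) :
    Tendsto (normAverage q x - normAverage q y) atTop (nhds 0) :=
  squeeze_zero_norm'
    ((eventually_gt_atTop 0).mono fun _ => hq.abs_normAverage_sub_le x y)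
    (tendsto_const_nhds.div_atTop tendsto_id)

theorem besicovitchSeminorm_eq (hq : StepanovBoundedWith C q) (x y : ℝ) :
    besicovitchSeminorm q x = besicovitchSeminorm q y := by
  have hle (x y : ℝ) : besicovitchSeminorm q x ≤ besicovitchSeminorm q y :=
    limsup_le_limsup_of_tendsto_sub_zero (isBoundedUnder_ge_normAverage q y)
      (hq.isBoundedUnder_le_normAverage y) (hq.tendsto_normAverage_sub x y)
  exact (hle x y).antisymm (hle y x)

theorem besicovitchSeminorm_eq_zero_iff (hq : StepanovBoundedWith C q) (t : ℝ) :
    besicovitchSeminorm q t = 0 ↔ Tendsto (normAverage q t) atTop (nhds 0) := by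
  refine ⟨fun hzero => ?_, fun h => h.limsup_eq⟩
  have hliminf : 0 ≤ liminf (normAverage q t) atTop :=
    le_liminf_of_le (hq.isBoundedUnder_le_normAverage t).isCoboundedUnder_ge
      ((eventually_ge_atTop 0).mono fun _ => normAverage_nonneg q t)
  exact tendsto_of_le_liminf_of_limsup_le hliminf hzero.le (hq.isBoundedUnder_le_normAverage t)
    (isBoundedUnder_ge_normAverage q t)

theorem memB1WPAA0_iff (hq : StepanovBoundedWith C q) (ρ₁ ρ₂ : ℝ → ℝ) :
    MemB1WPAA0 ρ₁ ρ₂ q ↔ besicovitchSeminorm q 0 = 0 ∨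
      Tendsto (fun T : ℝ => (1 / (2 * ∫ t in (-T)..T, ρ₁ t)) * ∫ t in (-T)..T, ρ₂ t)
        atTop (nhds 0) := by
  change Tendsto (fun T : ℝ => (1 / (2 * ∫ t in (-T)..T, ρ₁ t)) *
    ∫ t in (-T)..T, besicovitchSeminorm q t * ρ₂ t) atTop (nhds 0) ↔ _
  simp only [fun t => hq.besicovitchSeminorm_eq t 0, intervalIntegral.integral_const_mul,
    mul_left_comm _ (besicovitchSeminorm q 0)]
  obtain hzero | hne := eq_or_ne (besicovitchSeminorm q 0) 0
  · simp [hzero]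
  · simpa [hne] using tendsto_const_smul_iff₀ (a := (0 : ℝ)) hne

end StepanovBoundedWith

end BesicovitchSeminorm

section Convolution

open scoped Convolution

variable {𝕜 E F G : Type*} [NontriviallyNormedField 𝕜]
  [NormedAddCommGroup E] [NormedSpace 𝕜 E] [NormedAddCommGroup F] [NormedSpace 𝕜 F]
  [NormedAddCommGroup G] [NormedSpace 𝕜 G]
  {C : ℝ} {g : ℝ → E} {q : ℝ → F}

namespace StepanovBoundedWith

theorem integrable_norm_mul_integral_norm_sub (hq : StepanovBoundedWith C q)
    (hg : Integrable g volume) (a b : ℝ) :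
    Integrable fun u : ℝ => ‖g u‖ * ∫ s in (a - u)..(b - u), ‖q s‖ := by
  refine hg.norm.mul_bdd (c := C * (|b - a| + 1))
    (hq.continuous_integral_norm (continuous_const.sub continuous_id)
      (continuous_const.sub continuous_id)).aestronglyMeasurable
    (Eventually.of_forall fun u => ?_)
  simpa only [Real.norm_eq_abs, sub_sub_sub_cancel_right] using
    hq.abs_integral_norm_le_mul (a - u) (b - u)

theorem integrableOn_norm_comp_sub (hq : StepanovBoundedWith C q) (a b u : ℝ) :
    IntegrableOn (fun s => ‖q (s - u)‖) (Ioc a b) volume := by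
  simpa only [sub_add_cancel] using
    ((hq.intervalIntegrable_norm (a - u) (b - u)).comp_sub_right u).1

theorem integral_norm_convolution_integrand_le (L : E →L[𝕜] F →L[𝕜] G)
    (hq : StepanovBoundedWith C q) {a b : ℝ} (hab : a ≤ b) (u : ℝ) :
    (∫ s in Ioc a b, ‖L (g u) (q (s - u))‖) ≤
      ‖L‖ * (‖g u‖ * ∫ s in (a - u)..(b - u), ‖q s‖) :=
  calc (∫ s in Ioc a b, ‖L (g u) (q (s - u))‖)
      ≤ ∫ s in Ioc a b, ‖L‖ * ‖g u‖ * ‖q (s - u)‖ :=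
        integral_mono_of_nonneg (Eventually.of_forall fun _ => norm_nonneg _)
          ((hq.integrableOn_norm_comp_sub a b u).const_mul _)
          (Eventually.of_forall fun _ => L.le_opNorm₂ _ _)
    _ = ‖L‖ * (‖g u‖ * ∫ s in (a - u)..(b - u), ‖q s‖) := by
        rw [integral_const_mul, ← intervalIntegral.integral_of_le hab,
          intervalIntegral.integral_comp_sub_right (fun s => ‖q s‖), mul_assoc]

theorem integrable_convolution_integrand (L : E →L[𝕜] F →L[𝕜] G)
    (hq : StepanovBoundedWith C q) (hg : Integrable g volume) {a b : ℝ} (hab : a ≤ b) :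
    Integrable (fun p : ℝ × ℝ => L (g p.2) (q (p.1 - p.2)))
      ((volume.restrict (Ioc a b)).prod volume) := by
  have hmeas : AEStronglyMeasurable (fun p : ℝ × ℝ => L (g p.2) (q (p.1 - p.2)))
      ((volume.restrict (Ioc a b)).prod volume) :=
    (hg.aestronglyMeasurable.convolution_integrand L hq.aestronglyMeasurable).mono_ac
      (Measure.absolutelyContinuous_of_le Measure.restrict_le_self |>.prod .rfl)
  refine (integrable_prod_iff' hmeas).2 ⟨?_, ?_⟩
  · filter_upwards [hmeas.prodMk_right] with u hu
    exact ((hq.integrableOn_norm_comp_sub a b u).const_mul (‖L‖ * ‖g u‖)).mono' hu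
      (Eventually.of_forall fun _ => L.le_opNorm₂ _ _)
  · refine ((hq.integrable_norm_mul_integral_norm_sub hg a b).const_mul ‖L‖).mono'
      hmeas.norm.prod_swap.integral_prod_right' (Eventually.of_forall fun u => ?_)
    rw [Real.norm_of_nonneg (integral_nonneg fun _ => norm_nonneg _)]
    exact hq.integral_norm_convolution_integrand_le L hab u

variable [NormedSpace ℝ G]

theorem integral_norm_convolution_le (L : E →L[𝕜] F →L[𝕜] G) (hq : StepanovBoundedWith C q)
    (hg : Integrable g volume) {a b : ℝ} (hab : a ≤ b) :
    (∫ s in a..b, ‖(g ⋆[L] q) s‖) ≤ ‖L‖ * ∫ u, ‖g u‖ * ∫ s in (a - u)..(b - u), ‖q s‖ := by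
  have hint := hq.integrable_convolution_integrand L hg hab
  calc (∫ s in a..b, ‖(g ⋆[L] q) s‖)
      ≤ ∫ s in Ioc a b, ∫ u, ‖L (g u) (q (s - u))‖ := by
        rw [intervalIntegral.integral_of_le hab]
        exact integral_mono_of_nonneg (Eventually.of_forall fun _ => norm_nonneg _)
          hint.integral_norm_prod_left
          (Eventually.of_forall fun _ => norm_integral_le_integral_norm _)
    _ = ∫ u, ∫ s in Ioc a b, ‖L (g u) (q (s - u))‖ := integral_integral_swap hint.norm
    _ ≤ ∫ u, ‖L‖ * (‖g u‖ * ∫ s in (a - u)..(b - u), ‖q s‖) :=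
        integral_mono hint.integral_norm_prod_right
          ((hq.integrable_norm_mul_integral_norm_sub hg a b).const_mul _)
          fun u => hq.integral_norm_convolution_integrand_le L hab u
    _ = ‖L‖ * ∫ u, ‖g u‖ * ∫ s in (a - u)..(b - u), ‖q s‖ := integral_const_mul _ _

theorem intervalIntegrable_convolution (L : E →L[𝕜] F →L[𝕜] G) (hq : StepanovBoundedWith C q)
    (hg : Integrable g volume) (a b : ℝ) : IntervalIntegrable (g ⋆[L] q) volume a b := by
  wlog hab : a ≤ b generalizing a b
  · exact (this b a (le_of_not_ge hab)).symm
  exact (intervalIntegrable_iff_integrableOn_Ioc_of_le hab).2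
    (hq.integrable_convolution_integrand L hg hab).integral_prod_left

theorem convolution (L : E →L[𝕜] F →L[𝕜] G) (hq : StepanovBoundedWith C q)
    (hg : Integrable g volume) :
    StepanovBoundedWith (‖L‖ * ((∫ u, ‖g u‖) * C)) (g ⋆[L] q) where
  aestronglyMeasurable :=
    (hg.aestronglyMeasurable.convolution_integrand L hq.aestronglyMeasurable).integral_prod_right'
  intervalIntegrable_norm a b := (hq.intervalIntegrable_convolution L hg a b).norm
  integral_norm_le t :=
    have ht : t ≤ t + 1 := by linarith
    calc (∫ s in t..(t + 1), ‖(g ⋆[L] q) s‖)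
        ≤ ‖L‖ * ∫ u, ‖g u‖ * ∫ s in (t - u)..(t + 1 - u), ‖q s‖ :=
          hq.integral_norm_convolution_le L hg ht
      _ ≤ ‖L‖ * ∫ u, ‖g u‖ * C := by
          gcongr ‖L‖ * ?_
          refine integral_mono (hq.integrable_norm_mul_integral_norm_sub hg t (t + 1))
            (hg.norm.mul_const C) fun u => ?_
          rw [add_sub_right_comm]
          exact mul_le_mul_of_nonneg_left (hq.integral_norm_le (t - u)) (norm_nonneg _)
      _ = ‖L‖ * ((∫ u, ‖g u‖) * C) := by rw [integral_mul_const]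

theorem normAverage_convolution_le (L : E →L[𝕜] F →L[𝕜] G) (hq : StepanovBoundedWith C q)
    (hg : Integrable g volume) (t : ℝ) {l : ℝ} (hl : 0 ≤ l) :
    normAverage (g ⋆[L] q) t l ≤ ‖L‖ * ∫ u, ‖g u‖ * normAverage q (t - u) l :=
  calc normAverage (g ⋆[L] q) t l
      ≤ 1 / (2 * l) * (‖L‖ * ∫ u, ‖g u‖ * ∫ s in (t - l - u)..(t + l - u), ‖q s‖) := by
        rw [normAverage]
        gcongr
        exact hq.integral_norm_convolution_le L hg (by linarith)
    _ = ‖L‖ * ∫ u, ‖g u‖ * normAverage q (t - u) l := by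
        simp only [normAverage, mul_left_comm _ (1 / (2 * l)), integral_const_mul,
          sub_right_comm t l, add_sub_right_comm t l]

theorem tendsto_integral_norm_mul_normAverage_sub (hq : StepanovBoundedWith C q)
    (hg : Integrable g volume) (t : ℝ) (hzero : besicovitchSeminorm q t = 0) :
    Tendsto (fun l => ∫ u, ‖g u‖ * normAverage q (t - u) l) atTop (nhds 0) := by
  rw [← integral_zero ℝ ℝ]
  refine tendsto_integral_filter_of_dominated_convergence (fun u => ‖g u‖ * (2 * C))
    (Eventually.of_forall fun l => ?_) ?_ (hg.norm.mul_const _) (Eventually.of_forall fun u => ?_)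
  · exact hg.norm.aestronglyMeasurable.mul
      ((hq.continuous_normAverage l).comp (continuous_const.sub continuous_id)).aestronglyMeasurable
  · filter_upwards [eventually_ge_atTop 1] with l hl
    refine Eventually.of_forall fun u => ?_
    rw [norm_mul, norm_norm, Real.norm_of_nonneg (normAverage_nonneg q _ (by linarith))]
    exact mul_le_mul_of_nonneg_left (hq.normAverage_le _ hl) (norm_nonneg _)
  · have hlim : Tendsto (normAverage q (t - u)) atTop (nhds 0) :=
      (hq.besicovitchSeminorm_eq_zero_iff _).1 ((hq.besicovitchSeminorm_eq _ t).trans hzero)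
    simpa only [mul_zero] using hlim.const_mul ‖g u‖

theorem besicovitchSeminorm_convolution_eq_zero (L : E →L[𝕜] F →L[𝕜] G)
    (hq : StepanovBoundedWith C q) (hg : Integrable g volume) {t : ℝ}
    (hzero : besicovitchSeminorm q t = 0) : besicovitchSeminorm (g ⋆[L] q) t = 0 := by
  have hmajorant := (hq.tendsto_integral_norm_mul_normAverage_sub hg t hzero).const_mul ‖L‖
  rw [mul_zero] at hmajorant
  refine ((hq.convolution L hg).besicovitchSeminorm_eq_zero_iff t).2
    (squeeze_zero' ?_ ?_ hmajorant)
  · exact (eventually_ge_atTop 0).mono fun _ => normAverage_nonneg _ t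
  · exact (eventually_ge_atTop 0).mono fun _ => hq.normAverage_convolution_le L hg t

end StepanovBoundedWith

theorem convolution_invariance_B1WPAA0_general [NormedSpace ℝ G] [CompleteSpace G]
    (L : E →L[𝕜] F →L[𝕜] G) {ρ₁ ρ₂ : ℝ → ℝ}
    (_hρ₁ : ∀ a b : ℝ, IntervalIntegrable ρ₁ volume a b)
    (_hρ₁_ne : ∀ᶠ T in atTop, (∫ t in (-T)..T, ρ₁ t) ≠ 0)
    (_hρ₂ : ∀ a b : ℝ, IntervalIntegrable ρ₂ volume a b)
    (hq : StepanovBoundedWith C q) (hg : Integrable g volume) (hmem : MemB1WPAA0 ρ₁ ρ₂ q) :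
    MemB1WPAA0 ρ₁ ρ₂ (g ⋆[L] q) :=
  ((hq.convolution L hg).memB1WPAA0_iff ρ₁ ρ₂).2 <|
    ((hq.memB1WPAA0_iff ρ₁ ρ₂).1 hmem).imp_left (hq.besicovitchSeminorm_convolution_eq_zero L hg)

end Convolution

/-- If `q` is `S¹`-bounded, `g ∈ L¹(ℝ)` and `q ∈ B^1WPAA_0(ℝ, X, ρ₁, ρ₂)`,
then the convolution `g∗q`, `(g∗q)(t) = ∫_{-∞}^{∞} g(t-r) q(r) dr`, belongs to
`B^1WPAA_0(ℝ, X, ρ₁, ρ₂)`. -/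
theorem convolution_invariance_B1WPAA0
    {X : Type*} [NormedAddCommGroup X] [NormedSpace ℂ X] [CompleteSpace X]
    (ρ₁ ρ₂ : ℝ → ℝ) (hρ₁ : IsWeightUInfty ρ₁) (hρ₂ : IsWeightUInfty ρ₂)
    (q : ℝ → X) (hqmeas : AEStronglyMeasurable q volume)
    (hqloc : ∀ a b : ℝ, IntervalIntegrable (fun t => ‖q t‖) volume a b)
    (hS1 : ∃ C : ℝ, ∀ t : ℝ, (∫ s in t..(t + 1), ‖q s‖) ≤ C)
    (g : ℝ → ℝ) (hg : Integrable g volume)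
    (hq : MemB1WPAA0 ρ₁ ρ₂ q) :
    MemB1WPAA0 ρ₁ ρ₂ (fun t : ℝ => ∫ r : ℝ, g (t - r) • q r) := by
  obtain ⟨C, hC⟩ := hS1
  have hconv : (fun t : ℝ => ∫ r : ℝ, g (t - r) • q r) = convolution g q (.lsmul ℝ ℝ) volume :=
    funext fun _ => convolution_lsmul_swap.symm
  rw [hconv]
  exact convolution_invariance_B1WPAA0_general _ hρ₁.1 (hρ₁.2.2.eventually_ne_atTop 0) hρ₂.1
    ⟨hqmeas, hqloc, hC⟩ hg hq
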